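/- arXiv:1912.09360 — 8 statements merged into one kernel-verified Lean document; each statement's English description precedes it below -/
import Mathlib

section
/- Let T be a spanning tree of G. If T is a minimum spanning tree of G, then for every nontree edge {i,j} of G and every edge {u,v} on the unique path in T connecting i and j, one has w({i,j}) ≥ w({u,v}). -/
open SimpleGraph

/-- `T` is a spanning tree of `G`: a connected acyclic (spanning) subgraph of `G`. -/
def IsSpanningTree {V : Type*} (G T : SimpleGraph V) : Prop :=
  T ≤ G ∧ T.IsTree

/-- The cost of a graph: the sum of the weights of its edges. -/
noncomputable def cost {V : Type*} (w : Sym2 V → ℝ) (T : SimpleGraph V) : ℝ :=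
  ∑ᶠ e ∈ T.edgeSet, w e

/-- `T` is a minimum spanning tree of `G` with respect to the weights `w`. -/
def IsMST {V : Type*} (G : SimpleGraph V) (w : Sym2 V → ℝ) (T : SimpleGraph V) : Prop :=
  IsSpanningTree G T ∧ ∀ T' : SimpleGraph V, IsSpanningTree G T' → cost w T ≤ cost w T'

/-- Exchanging an edge `f` of a path in the tree `T` for a new edge between the endpoints of
the path gives a tree. -/
theorem SimpleGraph.IsTree.deleteEdges_sup_edge {V : Type*} {T : SimpleGraph V} (hT : T.IsTree) {i j : V}
    (hij : i ≠ j) (hnot : s(i, j) ∉ T.edgeSet) {p : T.Walk i j} (hp : p.IsPath)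
    {f : Sym2 V} (hf : f ∈ p.edges) : (T.deleteEdges {f} ⊔ edge i j).IsTree := by
  refine ⟨?_, ?_⟩
  · have hle : T ≤ T ⊔ edge i j := le_sup_left
    have hadj : (T ⊔ edge i j).Adj j i := Or.inr (by simp [edge_adj, hij, hij.symm])
    have hcycle : (Walk.cons hadj (p.mapLe hle)).IsCycle := by
      refine (Walk.cons_isCycle_iff _ _).2 ⟨hp.mapLe hle, fun h => hnot ?_⟩
      rw [Walk.edges_mapLe_eq_edges, Sym2.eq_swap] at h
      exact p.edges_subset_edgeSet h
    have hbridge : ¬ (T ⊔ edge i j).IsBridge f := fun h =>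
      h.notMem_edges_of_isCycle hcycle (by simp [hf])
    have hconn : ((T ⊔ edge i j).deleteEdges {f}).Connected := by
      induction f with
      | h x y => exact (hT.connected.mono hle).connected_delete_edge_of_not_isBridge hbridge
    refine hconn.mono fun x y hxy => ?_
    simp only [deleteEdges_adj, sup_adj] at hxy ⊢
    tauto
  · refine (hT.isAcyclic.anti (deleteEdges_le _)).sup_edge_of_not_reachable fun hr => ?_
    obtain ⟨q, hq⟩ := hr.exists_isPath
    have hpq : p = q.mapLe (deleteEdges_le _) :=
      (hT.existsUnique_path i j).unique hp (hq.mapLe _)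
    have hfq : f ∈ q.edges := by
      rw [← Walk.edges_mapLe_eq_edges (deleteEdges_le {f}) q, ← hpq]
      exact hf
    simpa using q.edges_subset_edgeSet hfq

theorem cost_deleteEdges_sup_edge_add {V : Type*} [Finite V] (w : Sym2 V → ℝ) {T : SimpleGraph V} {i j : V}
    (hij : i ≠ j) (hnot : s(i, j) ∉ T.edgeSet) {f : Sym2 V} (hf : f ∈ T.edgeSet) :
    cost w (T.deleteEdges {f} ⊔ edge i j) + w f = cost w T + w s(i, j) := by
  have hT : T.edgeSet = insert f (T.edgeSet \ {f}) := by simp [Set.insert_eq_of_mem hf]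
  have hT' : (T.deleteEdges {f} ⊔ edge i j).edgeSet = insert s(i, j) (T.edgeSet \ {f}) := by
    rw [edgeSet_sup, edgeSet_deleteEdges, edgeSet_edge_of_ne hij, Set.union_singleton]
  have h₁ : cost w T = w f + ∑ᶠ e ∈ T.edgeSet \ {f}, w e := by
    rw [← finsum_mem_insert w (by simp) (Set.toFinite _), ← hT, cost]
  have h₂ : cost w (T.deleteEdges {f} ⊔ edge i j) =
      w s(i, j) + ∑ᶠ e ∈ T.edgeSet \ {f}, w e := by
    rw [← finsum_mem_insert w (fun h => hnot h.1) (Set.toFinite _), ← hT', cost]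
  rw [h₁, h₂]
  ring

/-- Path Optimality Condition, necessity: if `T` is a minimum spanning tree of `G`,
then for every nontree edge `{i,j}` of `G` and every edge `{u,v}` on the unique
path in `T` from `i` to `j`, `w {i,j} ≥ w {u,v}`. -/
theorem mst_path_optimality_necessary {V : Type*} [Fintype V]
    (G : SimpleGraph V) (hG : G.Connected) (w : Sym2 V → ℝ)
    (T : SimpleGraph V) (hT : IsMST G w T) :
    ∀ i j : V, G.Adj i j → s(i, j) ∉ T.edgeSet →
      ∀ p : T.Walk i j, p.IsPath → ∀ f ∈ p.edges, w s(i, j) ≥ w f := by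
  intro i j hadj hnot p hp f hf
  have hfT : f ∈ T.edgeSet := p.edges_subset_edgeSet hf
  have hle : T.deleteEdges {f} ⊔ edge i j ≤ G :=
    sup_le ((deleteEdges_le _).trans hT.1.1) ((edge_le_iff G).2 (Or.inr hadj))
  have hmin := hT.2 _ ⟨hle, hT.1.2.deleteEdges_sup_edge hadj.ne hnot hp hf⟩
  have hcost := cost_deleteEdges_sup_edge_add w hadj.ne hnot hfT
  linarith
end

section
/- Let T be a spanning tree of G. If for every nontree edge {i,j} of G and every edge {u,v} on the unique path in T connecting i and j one has w({i,j}) ≥ w({u,v}), then T is a minimum spanning tree of G. -/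
open SimpleGraph

/-- Adding the edge `s(u, v)` to a tree and removing an edge of the tree path from `u` to `v`
gives a tree again. -/
theorem SimpleGraph.IsTree.exists_isTree_edgeSet_exchange {V : Type*} [Finite V]
    {T : SimpleGraph V} (hT : T.IsTree) {u v : V} (huv : u ≠ v) (hadj : ¬ T.Adj u v)
    {p : T.Walk u v} (hp : p.IsPath) {f : Sym2 V} (hf : f ∈ p.edges) :
    ∃ T' : SimpleGraph V, T'.IsTree ∧ T'.edgeSet = insert s(u, v) (T.edgeSet \ {f}) := by
  have hfT : f ∈ T.edgeSet := p.edges_subset_edgeSet hf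
  have hle : T ≤ T ⊔ edge u v := le_sup_left
  have hvu : (T ⊔ edge u v).Adj v u := by simp [edge_adj, huv.symm]
  have hcycle : (Walk.cons hvu (p.mapLe hle)).IsCycle := by
    refine (Walk.cons_isCycle_iff _ _).2 ⟨hp.mapLe hle, fun h ↦ hadj ?_⟩
    rw [Walk.edges_mapLe_eq_edges, Sym2.eq_swap] at h
    exact p.edges_subset_edgeSet h
  have hconn : ((T ⊔ edge u v).deleteEdges {f}).Connected := by
    induction f with | h x y =>
    exact (hT.connected.mono hle).connected_delete_edge_of_not_isBridge
      fun h ↦ h.notMem_edges_of_isCycle hcycle (by simp [hf])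
  have hne : s(u, v) ≠ f := fun h ↦ hadj (by rwa [← h] at hfT)
  have hedge : ((T ⊔ edge u v).deleteEdges {f}).edgeSet =
      insert s(u, v) (T.edgeSet \ {f}) := by
    rw [edgeSet_deleteEdges, edgeSet_sup, edgeSet_edge_of_ne huv, Set.union_singleton,
      Set.insert_sdiff_of_notMem _ (by simpa using hne)]
  refine ⟨_, isTree_iff_connected_and_card.2 ⟨hconn, ?_⟩, hedge⟩
  rw [hedge, Nat.card_coe_set_eq, Set.ncard_exchange (by simpa using hadj) hfT,
    ← Nat.card_coe_set_eq]
  exact (isTree_iff_connected_and_card.1 hT).2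

/-- Symmetric exchange: every edge of `T` missing from `T'` closes a cycle in `T'` containing an edge
of `T'` whose fundamental cycle with respect to `T` contains the given edge. -/
theorem SimpleGraph.IsTree.exists_mem_edges_of_not_adj {V : Type*} {T T' : SimpleGraph V}
    (hT : T.IsTree) {u v : V} (huv : T.Adj u v) (hadj : ¬ T'.Adj u v) (p : T'.Walk u v) :
    ∃ x y : V, s(x, y) ∈ p.edges ∧ ¬ T.Adj x y ∧ ∀ q : T.Walk x y, s(u, v) ∈ q.edges := by
  have hbridge : ¬ (T.deleteEdges {s(u, v)}).Reachable u v :=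
    isAcyclic_iff_forall_adj_isBridge.1 hT.isAcyclic huv
  obtain ⟨d, hd, hx, hy⟩ := p.exists_boundary_dart
    {z | (T.deleteEdges {s(u, v)}).Reachable u z} (Reachable.refl u) hbridge
  refine ⟨d.fst, d.snd, List.mem_map_of_mem hd, fun h ↦ hy (hx.trans (Adj.reachable ?_)),
    fun q ↦ by_contra fun hq ↦ hy (hx.trans (q.toDeleteEdge _ hq).reachable)⟩
  refine deleteEdges_adj.2 ⟨h, fun he ↦ hadj ?_⟩
  rw [← mem_edgeSet, ← Set.mem_singleton_iff.1 he]
  exact d.adj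

theorem cost_exchange {V : Type*} [Finite V] (w : Sym2 V → ℝ) {T T' : SimpleGraph V}
    {e f : Sym2 V} (he : e ∉ T.edgeSet) (hf : f ∈ T.edgeSet)
    (h : T'.edgeSet = insert e (T.edgeSet \ {f})) : cost w T' + w f = cost w T + w e := by
  have hT : T.edgeSet = insert f (T.edgeSet \ {f}) := by simp [Set.insert_eq_of_mem hf]
  have hcost : cost w T = w f + ∑ᶠ a ∈ T.edgeSet \ {f}, w a := by
    unfold cost
    conv_lhs => rw [hT]
    exact finsum_mem_insert _ (by simp) (Set.toFinite _)
  have hcost' : cost w T' = w e + ∑ᶠ a ∈ T.edgeSet \ {f}, w a := by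
    rw [cost, h]
    exact finsum_mem_insert _ (by simp [he]) (Set.toFinite _)
  linarith

/-- Path Optimality Condition, sufficiency: if `T` is a spanning tree of `G` such that
for every nontree edge `{i,j}` of `G` and every edge `{u,v}` on the unique path in `T`
from `i` to `j` one has `w {i,j} ≥ w {u,v}`, then `T` is a minimum spanning tree. -/
theorem mst_path_optimality_sufficient {V : Type*} [Fintype V]
    (G : SimpleGraph V) (hG : G.Connected) (w : Sym2 V → ℝ)
    (T : SimpleGraph V) (hT : IsSpanningTree G T)
    (hpath : ∀ i j : V, G.Adj i j → s(i, j) ∉ T.edgeSet →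
      ∀ p : T.Walk i j, p.IsPath → ∀ f ∈ p.edges, w s(i, j) ≥ w f) :
    IsMST G w T := by
  refine ⟨hT, fun T' hT' ↦ ?_⟩
  induction hn : (T'.edgeSet \ T.edgeSet).ncard using Nat.strong_induction_on generalizing T' with
  | _ n ih =>
  subst hn
  by_cases hle : T ≤ T'
  · rw [hle.antisymm ((isTree_iff_minimal_connected.1 hT'.2).2 hT.2.connected hle)]
  obtain ⟨u, v, huv, hadj⟩ : ∃ u v, T.Adj u v ∧ ¬ T'.Adj u v := by
    simpa [le_iff_adj] using hle
  obtain ⟨p, hp⟩ := (hT'.2.existsUnique_path u v).exists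
  obtain ⟨x, y, hf, hxy, hcut⟩ := hT.2.exists_mem_edges_of_not_adj huv hadj p
  have hfT' : s(x, y) ∈ T'.edgeSet := p.edges_subset_edgeSet hf
  obtain ⟨T'', htree, hedge⟩ := hT'.2.exists_isTree_edgeSet_exchange huv.ne hadj hp hf
  obtain ⟨q, hq⟩ := (hT.2.existsUnique_path x y).exists
  have hw := hpath x y (hT'.1 hfT') hxy q hq _ (hcut q)
  have hT'' : IsSpanningTree G T'' := by
    refine ⟨edgeSet_subset_edgeSet.1 ?_, htree⟩
    rw [hedge]
    exact Set.insert_subset (hT.1 huv)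
      (Set.sdiff_subset.trans (edgeSet_subset_edgeSet.2 hT'.1))
  have hlt : (T''.edgeSet \ T.edgeSet).ncard < (T'.edgeSet \ T.edgeSet).ncard := by
    refine Set.ncard_lt_ncard ⟨?_, fun h ↦ ?_⟩ (Set.toFinite _)
    · rw [hedge, Set.insert_sdiff_of_mem _ (T.mem_edgeSet.2 huv)]
      exact Set.sdiff_subset_sdiff_left Set.sdiff_subset
    · have := (h ⟨hfT', hxy⟩).1
      rw [hedge] at this
      rcases this with h | h
      · exact hxy (by rw [← mem_edgeSet, h]; exact huv)
      · exact h.2 rfl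
  have hcost := cost_exchange w hadj hfT' hedge
  linarith [ih _ hlt T'' hT'' rfl]
end

section
/- Let T be a spanning tree of G. If for every tree edge {i,j} of T and every edge {u,v} of G contained in the cut formed by deleting the edge {i,j} from T one has w({i,j}) ≤ w({u,v}), then T is a minimum spanning tree of G. -/
open SimpleGraph

/-- In a tree, exchanging an edge on the path between two nonadjacent vertices for the edge
joining them gives a tree. -/
theorem SimpleGraph.IsTree.exchange {V : Type*} [Finite V] {T : SimpleGraph V} (hT : T.IsTree)
    {i j : V} (hne : i ≠ j) (hij : ¬ T.Adj i j) {p : T.Walk i j} (hp : p.IsPath)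
    {f : Sym2 V} (hf : f ∈ p.edges) :
    ∃ T' : SimpleGraph V, T'.IsTree ∧ T'.edgeSet = insert s(i, j) (T.edgeSet \ {f}) := by
  have hfT : f ∈ T.edgeSet := p.edges_subset_edgeSet hf
  have hef : s(i, j) ≠ f := fun h => hij (by rwa [← h] at hfT)
  have hle : T ≤ T ⊔ edge i j := le_sup_left
  have hconn : (T ⊔ edge i j).Connected := hT.connected.mono hle
  have hadj : (T ⊔ edge i j).Adj j i := by simp [edge_adj, hne.symm]
  have hcyc : (Walk.cons hadj (p.mapLe hle)).IsCycle := by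
    rw [Walk.cons_isCycle_iff]
    refine ⟨hp.mapLe hle, fun h => hij ?_⟩
    rw [Walk.edges_mapLe_eq_edges, Sym2.eq_swap] at h
    exact p.edges_subset_edgeSet h
  have hbr : ¬ (T ⊔ edge i j).IsBridge f := fun h =>
    h.notMem_edges_of_isCycle hcyc (by simp [hf])
  have hedges : ((T ⊔ edge i j).deleteEdges {f}).edgeSet
      = insert s(i, j) (T.edgeSet \ {f}) := by
    rw [edgeSet_deleteEdges, edgeSet_sup, edgeSet_edge_of_ne hne, Set.union_singleton,
      Set.insert_sdiff_of_notMem _ (by simpa using hef)]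
  refine ⟨_, isTree_iff_connected_and_card.mpr ⟨?_, ?_⟩, hedges⟩
  · induction f with | _ u v => exact hconn.connected_delete_edge_of_not_isBridge hbr
  · rw [hedges, ← (isTree_iff_connected_and_card.mp hT).2, Nat.card_coe_set_eq,
      Nat.card_coe_set_eq, Set.ncard_exchange (by exact hij) hfT]

/-- Exchanging an edge for one of no larger weight does not increase the cost. -/
theorem cost_le_of_edgeSet_eq_exchange {V : Type*} [Finite V] (w : Sym2 V → ℝ)
    {T T' : SimpleGraph V} {e f : Sym2 V} (he : e ∉ T.edgeSet) (hf : f ∈ T.edgeSet)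
    (hedges : T'.edgeSet = insert e (T.edgeSet \ {f})) (hw : w e ≤ w f) :
    cost w T' ≤ cost w T := by
  have hT : T.edgeSet = insert f (T.edgeSet \ {f}) := (Set.insert_sdiff_self_of_mem hf).symm
  unfold cost
  rw [hedges, finsum_mem_insert _ (fun h => he h.1) (Set.toFinite _)]
  conv_rhs => rw [hT, finsum_mem_insert _ (fun h => h.2 rfl) (Set.toFinite _)]
  gcongr

/-- A walk between the endpoints of an edge `s(i, j)` of an acyclic graph `T` contains an edge of
the cut formed by deleting `s(i, j)` from `T`. -/
theorem SimpleGraph.IsAcyclic.exists_mem_edges_not_reachable {V : Type*} {T H : SimpleGraph V}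
    (hT : T.IsAcyclic) {i j : V} (hij : T.Adj i j) (p : H.Walk i j) :
    ∃ u v, s(u, v) ∈ p.edges ∧ ¬ (T.deleteEdges {s(i, j)}).Reachable u v := by
  have hbr : ¬ (T.deleteEdges {s(i, j)}).Reachable i j :=
    isBridge_iff.mp (isAcyclic_iff_forall_adj_isBridge.mp hT hij)
  obtain ⟨d, hd, hfst, hsnd⟩ := p.exists_boundary_dart
    {x | (T.deleteEdges {s(i, j)}).Reachable i x} (Reachable.refl i) hbr
  exact ⟨d.fst, d.snd, List.mem_map_of_mem hd, fun h => hsnd (hfst.trans h)⟩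

/-- Cut Optimality Condition, sufficiency: if `T` is a spanning tree of `G` such that
for every tree edge `{i,j}` and every edge `{u,v}` of `G` in the cut formed by
deleting `{i,j}` from `T` one has `w {i,j} ≤ w {u,v}`, then `T` is a minimum
spanning tree of `G`. -/
theorem mst_cut_optimality_sufficient {V : Type*} [Fintype V]
    (G : SimpleGraph V) (hG : G.Connected) (w : Sym2 V → ℝ)
    (T : SimpleGraph V) (hT : IsSpanningTree G T)
    (hcut : ∀ i j : V, T.Adj i j →
      ∀ u v : V, G.Adj u v → ¬ (T.deleteEdges {s(i, j)}).Reachable u v →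
        w s(i, j) ≤ w s(u, v)) :
    IsMST G w T := by
  refine ⟨hT, fun T' hT' => ?_⟩
  induction hn : (T'.edgeSet \ T.edgeSet).ncard using Nat.strong_induction_on generalizing T' with
  | _ n ih =>
  by_cases hle : T ≤ T'
  · rw [le_antisymm hle ((isTree_iff_minimal_connected.mp hT'.2).2 hT.2.connected hle)]
  obtain ⟨i, j, hij, hij'⟩ : ∃ i j, T.Adj i j ∧ ¬ T'.Adj i j := by
    by_contra! h
    exact hle fun i j => h i j
  obtain ⟨p, hp⟩ := hT'.2.connected.exists_isPath i j
  obtain ⟨u, v, huv, hnr⟩ := hT.2.isAcyclic.exists_mem_edges_not_reachable hij p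
  have huvT' : T'.Adj u v := p.edges_subset_edgeSet huv
  have huvT : ¬ T.Adj u v := fun h => hnr <| Adj.reachable <| by
    rw [deleteEdges_adj]
    exact ⟨h, fun he => hij' (by rwa [← mem_edgeSet, ← Set.mem_singleton_iff.mp he])⟩
  obtain ⟨T'', hT'', hedges⟩ := hT'.2.exchange hij.ne hij' hp huv
  have hT''G : T'' ≤ G := by
    rw [← edgeSet_subset_edgeSet, hedges, Set.insert_subset_iff]
    exact ⟨hT.1 hij, Set.sdiff_subset.trans (edgeSet_mono hT'.1)⟩
  have hdiff : T''.edgeSet \ T.edgeSet = (T'.edgeSet \ T.edgeSet) \ {s(u, v)} := by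
    rw [hedges, Set.insert_sdiff_of_mem _ (by exact hij), sdiff_right_comm]
  refine (ih _ ?_ T'' ⟨hT''G, hT''⟩ rfl).trans
    (cost_le_of_edgeSet_eq_exchange w hij' huvT' hedges (hcut i j hij u v (hT'.1 huvT') hnr))
  rw [← hn, hdiff]
  exact Set.ncard_sdiff_singleton_lt_of_mem ⟨huvT', huvT⟩
end

section
/- Let T be a minimum spanning tree of G and let e = {i,j} be a nontree edge of G. Then the minimum of cost(T') over all spanning trees T' of G containing the edge e equals cost(T) + r-cost(T,e), where r-cost(T,e) = w(e) − max{ w(f) : f an edge on P(T,i,j) }. -/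
open SimpleGraph

namespace SimpleGraph

variable {V : Type*} {G T : SimpleGraph V} {u v : V} {f : Sym2 V}

/-- If the endpoints of every edge of a walk are reachable from each other in `H`, then so are the
endpoints of the walk. -/
lemma Walk.reachable_of_forall_edges {H : SimpleGraph V} (p : T.Walk u v)
    (h : ∀ x y, s(x, y) ∈ p.edges → H.Reachable x y) : H.Reachable u v := by
  induction p with
  | nil => rfl
  | cons _ q ih =>
    exact (h _ _ (by simp)).trans (ih fun x y hxy => h x y (by simp [hxy]))

/-- Deleting an edge of a path in an acyclic graph separates the endpoints of the path. -/
lemma IsAcyclic.not_reachable_deleteEdges_of_mem_edges (hT : T.IsAcyclic) {p : T.Walk u v}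
    (hp : p.IsPath) (hf : f ∈ p.edges) : ¬ (T.deleteEdges {f}).Reachable u v := by
  classical
  induction f with | h x y
  rw [reachable_deleteEdges_iff_exists_walk]
  rintro ⟨q, hq⟩
  have hpq : p = q.toPath :=
    congrArg Subtype.val ((hT.subsingleton_path u v).elim ⟨p, hp⟩ q.toPath)
  exact hq (q.edges_toPath_subset_edges (hpq ▸ hf))

lemma edgeSet_deleteEdges_sup_edge (huv : u ≠ v) :
    (T.deleteEdges {f} ⊔ edge u v).edgeSet = insert s(u, v) (T.edgeSet \ {f}) := by
  rw [edgeSet_sup, edgeSet_deleteEdges, edgeSet_edge_of_ne huv, Set.union_comm,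
    Set.singleton_union]

lemma notMem_edgeSet_diff_of_not_reachable (h : ¬ (T.deleteEdges {f}).Reachable u v) :
    s(u, v) ∉ T.edgeSet \ {f} := by
  rw [← edgeSet_deleteEdges]
  exact fun hadj => h (Adj.reachable hadj)

lemma ne_of_not_reachable (h : ¬ G.Reachable u v) : u ≠ v := by
  rintro rfl
  exact h (.refl _)

/-- Exchanging an edge of a tree for one that joins the two remaining components gives a tree. -/
lemma IsTree.deleteEdges_sup_edge_s5 [Finite V] (hT : T.IsTree) (hf : f ∈ T.edgeSet)
    (h : ¬ (T.deleteEdges {f}).Reachable u v) : (T.deleteEdges {f} ⊔ edge u v).IsTree := by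
  have := hT.connected.nonempty
  obtain ⟨F, hle, -, hF⟩ := (connected_top (V := V)).exists_isTree_le_of_le_of_isAcyclic le_top
    ((hT.isAcyclic.anti (deleteEdges_le _)).sup_edge_of_not_reachable h)
  suffices (T.deleteEdges {f} ⊔ edge u v).edgeSet = F.edgeSet by rwa [edgeSet_inj.1 this]
  refine Set.eq_of_subset_of_ncard_le (edgeSet_mono hle) ?_ (Set.toFinite _)
  have hFc := (isTree_iff_connected_and_card.1 hF).2
  have hTc := (isTree_iff_connected_and_card.1 hT).2
  rw [Nat.card_coe_set_eq] at hFc hTc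
  rw [edgeSet_deleteEdges_sup_edge (ne_of_not_reachable h),
    Set.ncard_insert_of_notMem (notMem_edgeSet_diff_of_not_reachable h) (Set.toFinite _),
    Set.ncard_sdiff_singleton_add_one hf (Set.toFinite _)]
  omega

lemma cost_deleteEdges_sup_edge [Finite V] (w : Sym2 V → ℝ) (hf : f ∈ T.edgeSet)
    (h : ¬ (T.deleteEdges {f}).Reachable u v) :
    cost w (T.deleteEdges {f} ⊔ edge u v) = cost w T + (w s(u, v) - w f) := by
  have hT : cost w T = w f + ∑ᶠ e ∈ T.edgeSet \ {f}, w e := by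
    rw [cost, ← finsum_mem_insert w (by simp) (Set.toFinite _), Set.insert_sdiff_singleton,
      Set.insert_eq_of_mem hf]
  rw [hT, cost, edgeSet_deleteEdges_sup_edge (ne_of_not_reachable h),
    finsum_mem_insert w (notMem_edgeSet_diff_of_not_reachable h) (Set.toFinite _)]
  ring

end SimpleGraph

lemma IsSpanningTree.deleteEdges_sup_edge_s5 {V : Type*} [Finite V] {G T : SimpleGraph V} {u v : V}
    {f : Sym2 V} (hT : IsSpanningTree G T)
    (hf : f ∈ T.edgeSet) (huv : G.Adj u v) (h : ¬ (T.deleteEdges {f}).Reachable u v) :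
    IsSpanningTree G (T.deleteEdges {f} ⊔ edge u v) :=
  ⟨sup_le ((deleteEdges_le _).trans hT.1) ((edge_le_iff G).2 (.inr huv)),
    hT.2.deleteEdges_sup_edge_s5 hf h⟩

/-- Let `T` be an MST of `G` and `e = {i,j}` a nontree edge of `G`. Then the minimum of
`cost T'` over spanning trees `T'` of `G` containing `e` equals
`cost T + (w e - max { w f : f on P(T,i,j) })`; here `r` is a maximum-weight edge of
the path `P(T,i,j)`, so that this maximum is `w r`. -/
theorem mst_imposed_edge_cost {V : Type*} [Fintype V]
    (G : SimpleGraph V) (hG : G.Connected) (w : Sym2 V → ℝ)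
    (T : SimpleGraph V) (hT : IsMST G w T)
    (i j : V) (hij : G.Adj i j) (hnt : s(i, j) ∉ T.edgeSet)
    (p : T.Walk i j) (hp : p.IsPath)
    (r : Sym2 V) (hr : r ∈ p.edges) (hrmax : ∀ f ∈ p.edges, w f ≤ w r) :
    IsLeast {c : ℝ | ∃ T' : SimpleGraph V,
        IsSpanningTree G T' ∧ s(i, j) ∈ T'.edgeSet ∧ c = cost w T'}
      (cost w T + (w s(i, j) - w r)) := by
  constructor
  · have hrT := p.edges_subset_edgeSet hr
    have h := hT.1.2.isAcyclic.not_reachable_deleteEdges_of_mem_edges hp hr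
    refine ⟨T.deleteEdges {r} ⊔ edge i j, hT.1.deleteEdges_sup_edge_s5 hrT hij h, ?_,
      (cost_deleteEdges_sup_edge w hrT h).symm⟩
    rw [edgeSet_deleteEdges_sup_edge hij.ne]
    exact Set.mem_insert _ _
  · rintro _ ⟨T', hT', he, rfl⟩
    have hbridge : ¬ (T'.deleteEdges {s(i, j)}).Reachable i j :=
      isAcyclic_iff_forall_isBridge.1 hT'.2.isAcyclic he
    obtain ⟨x, y, hxy, h⟩ : ∃ x y, s(x, y) ∈ p.edges ∧
        ¬ (T'.deleteEdges {s(i, j)}).Reachable x y := by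
      by_contra! hall
      exact hbridge (p.reachable_of_forall_edges hall)
    have hle := hT.2 _ (hT'.deleteEdges_sup_edge_s5 he (hT.1.1 (p.adj_of_mem_edges hxy)) h)
    rw [cost_deleteEdges_sup_edge w he h] at hle
    linarith [hrmax _ hxy]
end

section
/- Let T be a minimum spanning tree of G, let {i,j} be a nontree edge of G, let r be an edge of maximum weight on P(T,i,j), and let T_{i,j} be the spanning tree obtained from T by removing r and adding {i,j}. Then for every edge {k,l} of G that is a nontree edge of T with {k,l} ≠ {i,j}, the maximum weight of an edge different from {i,j} on the path P(T_{i,j},k,l) is at most the maximum weight of an edge on the path P(T,k,l); consequently r-cost(T_{i,j},{k,l}) ≥ r-cost(T,{k,l}). (If every edge of P(T_{i,j},k,l) equals {i,j}, the replacement cost in T_{i,j} is taken to be +∞ and the inequality holds by convention.) -/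
open SimpleGraph

namespace SimpleGraph

variable {V : Type*} {G : SimpleGraph V} {u v : V}

/-- In an acyclic graph, every walk traverses all edges of the path joining its endpoints. -/
lemma IsAcyclic.edges_subset_of_isPath (hG : G.IsAcyclic) {p : G.Walk u v} (hp : p.IsPath)
    (q : G.Walk u v) : p.edges ⊆ q.edges := by
  classical
  have h : p = q.bypass := congrArg Subtype.val
    ((hG.subsingleton_path u v).elim ⟨p, hp⟩ ⟨_, q.bypass_isPath⟩)
  rw [h]
  exact q.edges_bypass_subset_edges

/-- Exchanging an edge on the path between `u` and `v` for `s(u, v)` preserves acyclicity. -/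
lemma IsAcyclic.exchange (hG : G.IsAcyclic) {p : G.Walk u v} (hp : p.IsPath) {e : Sym2 V}
    (he : e ∈ p.edges) : (fromEdgeSet ((G.edgeSet \ {e}) ∪ {s(u, v)})).IsAcyclic := by
  have h : ¬ (G.deleteEdges {e}).Reachable u v := by
    rintro ⟨q⟩
    have hmem := hG.edges_subset_of_isPath hp (q.mapLe (deleteEdges_le _)) he
    rw [Walk.edges_mapLe_eq_edges] at hmem
    have := q.edges_subset_edgeSet hmem
    simp at this
  refine ((hG.anti (deleteEdges_le _)).sup_edge_of_not_reachable h).anti fun a b hab ↦ ?_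
  simp only [fromEdgeSet_adj, Set.mem_union, Set.mem_sdiff, mem_edgeSet, Set.mem_singleton_iff,
    sup_adj, deleteEdges_adj, edge_adj] at hab ⊢
  grind

/-- If `p` is a path from `u` to `v` and `s(u, v)` is not an edge of `p`, then the endpoints of any
edge of `p` remain connected after exchanging that edge for `s(u, v)`. -/
lemma Walk.IsPath.reachable_exchange {p : G.Walk u v} (hp : p.IsPath) (huv : s(u, v) ∉ p.edges)
    {a b : V} (hab : s(a, b) ∈ p.edges) :
    (fromEdgeSet (({e | e ∈ p.edges} \ {s(a, b)}) ∪ {s(u, v)})).Reachable a b := by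
  set H := fromEdgeSet ({e | e ∈ p.edges} ∪ {s(u, v)})
  have hne : u ≠ v := by
    rintro rfl
    simp [(Walk.isPath_iff_nil.1 hp).eq_nil] at hab
  have hpH : ∀ e ∈ p.edges, e ∈ H.edgeSet := fun e he ↦ by
    simp [H, he, G.not_isDiag_of_mem_edgeSet (p.edges_subset_edgeSet he)]
  have hvu : H.Adj v u := by simp [H, hne.symm, Sym2.eq_swap]
  have hcycle : (Walk.cons hvu (p.transfer H hpH)).IsCycle := by
    rw [Walk.cons_isCycle_iff]
    exact ⟨hp.transfer hpH, by rwa [Walk.edges_transfer, Sym2.eq_swap]⟩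
  have hbridge : ¬ H.IsBridge s(a, b) := fun h ↦
    (isBridge_iff_forall_cycle_notMem (hpH _ hab)).1 h _ hcycle (by simp [hab])
  rw [isBridge_iff, not_not] at hbridge
  refine hbridge.mono fun x y hxy ↦ ?_
  simp only [H, deleteEdges_adj, fromEdgeSet_adj, Set.mem_union, Set.mem_sdiff, Set.mem_ofPred_eq,
    Set.mem_singleton_iff] at hxy ⊢
  tauto

/-- If every edge of a walk in `G` joins vertices reachable from each other in `H`, then so are the
endpoints of the walk. -/
lemma Walk.reachable_of_forall_mem_edges {H : SimpleGraph V} (q : G.Walk u v)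
    (h : ∀ a b, s(a, b) ∈ q.edges → H.Reachable a b) : H.Reachable u v := by
  induction q with
  | nil => rfl
  | cons hadj q ih =>
    exact (h _ _ (by simp)).trans (ih fun a b hab ↦ h a b (by simp [hab]))

/-- Exchanging an edge `e` on the path `p` for `s(u, v)` in an acyclic graph: the edges other than
`s(u, v)` on a path in the new graph lie on the old path `q` or, if `q` contains `e`, on `p`. -/
lemma IsAcyclic.mem_edges_of_exchange (hG : G.IsAcyclic) {p : G.Walk u v} (hp : p.IsPath)
    (huv : s(u, v) ∉ G.edgeSet) {e : Sym2 V} (he : e ∈ p.edges) {k l : V} (q : G.Walk k l)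
    {q' : (fromEdgeSet ((G.edgeSet \ {e}) ∪ {s(u, v)})).Walk k l} (hq' : q'.IsPath)
    {f : Sym2 V} (hf : f ∈ q'.edges) (hfne : f ≠ s(u, v)) :
    f ∈ q.edges ∨ e ∈ q.edges ∧ f ∈ p.edges := by
  have hacyc := hG.exchange hp he
  by_cases heq : e ∈ q.edges
  · set H := fromEdgeSet (({d | d ∈ q.edges ∨ d ∈ p.edges} \ {e}) ∪ {s(u, v)})
    have hH : H ≤ fromEdgeSet ((G.edgeSet \ {e}) ∪ {s(u, v)}) := by
      refine fromEdgeSet_mono (Set.union_subset_union_left _ (Set.sdiff_subset_sdiff_left ?_))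
      rintro d (hd | hd)
      exacts [q.edges_subset_edgeSet hd, p.edges_subset_edgeSet hd]
    obtain ⟨t⟩ : H.Reachable k l := by
      refine q.reachable_of_forall_mem_edges fun a b hab ↦ ?_
      by_cases hr : s(a, b) = e
      · subst hr
        refine (hp.reachable_exchange (fun h ↦ huv (p.edges_subset_edgeSet h)) he).mono ?_
        exact fromEdgeSet_mono (Set.union_subset_union_left _
          (Set.sdiff_subset_sdiff_left fun d hd ↦ Or.inr hd))
      · have hadj : H.Adj a b := by simp [H, hab, hr, (q.adj_of_mem_edges hab).ne]
        exact hadj.reachable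
    have hft := hacyc.edges_subset_of_isPath hq' (t.mapLe hH) hf
    rw [Walk.edges_mapLe_eq_edges] at hft
    have hfH := t.edges_subset_edgeSet hft
    simp only [H, edgeSet_fromEdgeSet, Set.mem_sdiff, Set.mem_union, Set.mem_ofPred_eq,
      Set.mem_singleton_iff] at hfH
    tauto
  · have hq : ∀ d ∈ q.edges,
        d ∈ (fromEdgeSet ((G.edgeSet \ {e}) ∪ {s(u, v)})).edgeSet := fun d hd ↦ by
      have hdG := q.edges_subset_edgeSet hd
      have hde : d ≠ e := fun h ↦ heq (h ▸ hd)
      simp [hdG, hde, G.not_isDiag_of_mem_edgeSet hdG]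
    have := hacyc.edges_subset_of_isPath hq' (q.transfer _ hq) hf
    rw [Walk.edges_transfer] at this
    exact Or.inl this

end SimpleGraph

/-- Let `T` be an MST of `G`, `{i,j}` a nontree edge, `r` a maximum-weight edge on
`P(T,i,j)`, and `T_{i,j}` the tree obtained from `T` by removing `r` and adding `{i,j}`.
Let `{k,l}` be a nontree edge of `T` different from `{i,j}`, and `rkl` a maximum-weight
edge on `P(T,k,l)`. Then every edge `f ≠ {i,j}` on the path from `k` to `l` in `T_{i,j}`
satisfies `w f ≤ w rkl`; i.e. the maximum weight of a non-imposed edge on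
`P(T_{i,j},k,l)` is at most the maximum weight of an edge on `P(T,k,l)`, hence
`r-cost(T_{i,j},{k,l}) ≥ r-cost(T,{k,l})` (vacuously when only `{i,j}` is left on the
path, matching the `+∞` convention). -/
theorem mst_replacement_cost_monotone {V : Type*} [Fintype V]
    (G : SimpleGraph V) (hG : G.Connected) (w : Sym2 V → ℝ)
    (T : SimpleGraph V) (hT : IsMST G w T)
    (i j : V) (hij : G.Adj i j) (hnt : s(i, j) ∉ T.edgeSet)
    (p : T.Walk i j) (hp : p.IsPath)
    (r : Sym2 V) (hr : r ∈ p.edges) (hrmax : ∀ f ∈ p.edges, w f ≤ w r)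
    (k l : V) (hkl : G.Adj k l) (hklnt : s(k, l) ∉ T.edgeSet)
    (hne : s(k, l) ≠ s(i, j))
    (q : T.Walk k l) (hq : q.IsPath)
    (rkl : Sym2 V) (hrkl : rkl ∈ q.edges) (hrklmax : ∀ f ∈ q.edges, w f ≤ w rkl) :
    ∀ q' : (fromEdgeSet ((T.edgeSet \ {r}) ∪ {s(i, j)})).Walk k l, q'.IsPath →
      ∀ f ∈ q'.edges, f ≠ s(i, j) → w f ≤ w rkl := by
  intro q' hq' f hf hfne
  rcases hT.1.2.isAcyclic.mem_edges_of_exchange hp hnt hr q hq' hf hfne with h | ⟨hrq, hfp⟩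
  · exact hrklmax f h
  · exact (hrmax f hfp).trans (hrklmax r hrq)
end

section
/- Let T be a minimum spanning tree of G and let e₁, e₂, …, eₙ be distinct nontree edges of G. Define T₀ = T and, for each m from 1 to n, let T_m be obtained from T_{m−1} by removing a maximum-weight edge among the edges of the path in T_{m−1} between the endpoints of e_m that do not belong to {e₁, …, e_{m−1}}, and adding the edge e_m (so T_n = T_{e₁,…,eₙ} contains all of e₁, …, eₙ, which are imposed). Then for every edge {k,l} of G with {k,l} ∉ T_n, r-cost(T_{e₁,…,eₙ},{k,l}) ≥ r-cost(T,{k,l}), where r-cost in T_{e₁,…,eₙ} is computed over non-imposed edges of the path (and is +∞ if the path contains only imposed edges). -/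
open SimpleGraph

lemma edges_subset_of_reachable {V : Type*} {T H : SimpleGraph V} (hT : T.IsAcyclic)
    (hle : H ≤ T) {u v : V} (h : H.Reachable u v) {p : T.Walk u v} (hp : p.IsPath) :
    ∀ e ∈ p.edges, e ∈ H.edgeSet := by
  obtain ⟨q, hq⟩ := h.exists_isPath
  have hpq : p = q.mapLe hle :=
    congrArg Subtype.val ((hT.subsingleton_path u v).elim ⟨p, hp⟩ ⟨q.mapLe hle, hq.mapLe hle⟩)
  intro e he
  rw [hpq, Walk.edges_mapLe_eq_edges] at he
  exact q.edges_subset_edgeSet he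

/-- Exchanging an edge on the path between `u` and `v` for the edge `uv` keeps a graph
acyclic. -/
lemma isAcyclic_exchange {V : Type*} {T : SimpleGraph V} (hT : T.IsAcyclic) {u v : V}
    {p : T.Walk u v} (hp : p.IsPath) {r : Sym2 V} (hr : r ∈ p.edges) :
    (fromEdgeSet ((T.edgeSet \ {r}) ∪ {s(u, v)})).IsAcyclic := by
  have hnot : ¬ (T.deleteEdges {r}).Reachable u v := fun h => by
    simpa using edges_subset_of_reachable hT (T.deleteEdges_le {r}) h hp r hr
  have hac := (hT.anti (T.deleteEdges_le {r})).sup_edge_of_not_reachable hnot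
  refine hac.anti fun x y hxy => ?_
  simp only [fromEdgeSet_adj, sup_adj, deleteEdges_adj, edge_adj] at hxy ⊢
  aesop

/-- If all edges but one of a trail from `u` to `v` lie in `H`, then the endpoints of the
exceptional edge are reachable in `H` from the endpoints of the trail. -/
lemma reachable_ends_of_isTrail {V : Type*} {T H : SimpleGraph V} {x y u v : V}
    {p : T.Walk u v} (hp : p.IsTrail) (hxy : s(x, y) ∈ p.edges)
    (hH : ∀ e ∈ p.edges, e ≠ s(x, y) → e ∈ H.edgeSet) :
    (H.Reachable u x ∧ H.Reachable y v) ∨ (H.Reachable u y ∧ H.Reachable x v) := by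
  induction p with
  | nil => simp at hxy
  | @cons u t v hadj p ih =>
    rw [Walk.isTrail_cons] at hp
    by_cases heq : s(x, y) = s(u, t)
    · have hreach : H.Reachable t v :=
        ⟨p.transfer H fun e he => hH e (by simp [he]) fun h => hp.2 (heq ▸ h ▸ he)⟩
      rw [Sym2.eq_iff] at heq
      rcases heq with ⟨rfl, rfl⟩ | ⟨rfl, rfl⟩
      · exact Or.inl ⟨Reachable.refl _, hreach⟩
      · exact Or.inr ⟨Reachable.refl _, hreach⟩
    · have hut : H.Reachable u t := Adj.reachable (hH s(u, t) (by simp) (Ne.symm heq))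
      have hmem : s(x, y) ∈ p.edges := by
        simpa only [Walk.edges_cons, List.mem_cons, heq, false_or] using hxy
      exact (ih hp.1 hmem fun e he => hH e (by simp [he])).imp
        (And.imp_left hut.trans) (And.imp_left hut.trans)

/-- The subgraph of `T` formed by the edges which belong to `I` or have weight at most `c`. -/
def lightSubgraph {V : Type*} (T : SimpleGraph V) (w : Sym2 V → ℝ) (I : Set (Sym2 V)) (c : ℝ) :
    SimpleGraph V :=
  fromEdgeSet {e | e ∈ T.edgeSet ∧ (e ∈ I ∨ w e ≤ c)}

lemma mem_edgeSet_lightSubgraph {V : Type*} {T : SimpleGraph V} {w : Sym2 V → ℝ}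
    {I : Set (Sym2 V)} {c : ℝ} {e : Sym2 V} :
    e ∈ (lightSubgraph T w I c).edgeSet ↔ e ∈ T.edgeSet ∧ (e ∈ I ∨ w e ≤ c) := by
  simp only [lightSubgraph, edgeSet_fromEdgeSet, Set.mem_sdiff, Set.mem_ofPred_eq]
  exact ⟨And.left, fun h => ⟨h, T.not_isDiag_of_mem_edgeSet h.1⟩⟩

lemma lightSubgraph_le {V : Type*} (T : SimpleGraph V) (w : Sym2 V → ℝ) (I : Set (Sym2 V))
    (c : ℝ) : lightSubgraph T w I c ≤ T :=
  edgeSet_subset_edgeSet.1 fun _ he => (mem_edgeSet_lightSubgraph.1 he).1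

/-- Imposing the edge `uv` in place of a heaviest non-imposed edge `r` of the path between
`u` and `v` preserves reachability through light or imposed edges. -/
lemma reachable_lightSubgraph_exchange {V : Type*} {T : SimpleGraph V} {w : Sym2 V → ℝ}
    {I : Set (Sym2 V)} {c : ℝ} {u v : V} (huv : u ≠ v) {p : T.Walk u v} (hp : p.IsPath)
    {r : Sym2 V} (hr : r ∈ p.edges) (hrI : r ∉ I) (hmax : ∀ f ∈ p.edges, f ∉ I → w f ≤ w r)
    {x y : V} (h : (lightSubgraph T w I c).Reachable x y) :
    (lightSubgraph (fromEdgeSet ((T.edgeSet \ {r}) ∪ {s(u, v)})) w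
      (insert s(u, v) I) c).Reachable x y := by
  set T' := fromEdgeSet ((T.edgeSet \ {r}) ∪ {s(u, v)}) with hT'
  have hkeep : ∀ e ∈ T.edgeSet, e ≠ r → (e ∈ I ∨ w e ≤ c) →
      e ∈ (lightSubgraph T' w (insert s(u, v) I) c).edgeSet := by
    intro e he her hec
    rw [mem_edgeSet_lightSubgraph, hT', edgeSet_fromEdgeSet]
    exact ⟨⟨Or.inl ⟨he, her⟩, T.not_isDiag_of_mem_edgeSet he⟩, hec.imp_left (Or.inr ·)⟩
  have hadj : s(u, v) ∈ (lightSubgraph T' w (insert s(u, v) I) c).edgeSet := by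
    rw [mem_edgeSet_lightSubgraph, hT', edgeSet_fromEdgeSet]
    exact ⟨⟨Or.inr rfl, by simpa using huv⟩, Or.inl (Or.inl rfl)⟩
  obtain ⟨q⟩ := h
  induction q with
  | nil => exact Reachable.refl _
  | @cons x z y hxz q ih =>
    refine Reachable.trans ?_ ih
    obtain ⟨hT, hc⟩ := mem_edgeSet_lightSubgraph.1 ((mem_edgeSet _).2 hxz)
    by_cases heq : s(x, z) = r
    · subst heq
      have hrc := hc.resolve_left hrI
      have hH : ∀ e ∈ p.edges, e ≠ s(x, z) →
          e ∈ (lightSubgraph T' w (insert s(u, v) I) c).edgeSet := fun e he hne =>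
        hkeep e (p.edges_subset_edgeSet he) hne
          (or_iff_not_imp_left.2 fun heI => (hmax e he heI).trans hrc)
      have huv' := Adj.reachable ((mem_edgeSet _).1 hadj)
      rcases reachable_ends_of_isTrail hp.isTrail hr hH with ⟨h₁, h₂⟩ | ⟨h₁, h₂⟩
      · exact h₁.symm.trans (huv'.trans h₂.symm)
      · exact h₂.trans (huv'.symm.trans h₁)
    · exact Adj.reachable ((mem_edgeSet _).1 (hkeep _ hT heq hc))

/-- Let `T` be an MST of `G` and `e₁,…,eₙ` (with `eₘ = {a m, b m}`) distinct nontree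
edges of `G`. Let `T₀ = T` and let `Tₘ` be obtained from `Tₘ₋₁` by removing a
maximum-weight edge, among the edges of the path in `Tₘ₋₁` between the endpoints of
`eₘ` that are not among `e₁,…,eₘ₋₁`, and adding `eₘ`. Then for every edge `{k,l}` of
`G` not in `Tₙ`, with `rkl` a maximum-weight edge on `P(T,k,l)`, every non-imposed
edge `f` (i.e. `f ∉ {e₁,…,eₙ}`) on the path from `k` to `l` in `Tₙ` satisfies
`w f ≤ w rkl`; that is, `r-cost(T_{e₁,…,eₙ},{k,l}) ≥ r-cost(T,{k,l})` (vacuously when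
the path contains only imposed edges, matching the `+∞` convention). -/
theorem mst_replacement_cost_monotone_iterated {V : Type*} [Fintype V]
    (G : SimpleGraph V) (hG : G.Connected) (w : Sym2 V → ℝ)
    (T : SimpleGraph V) (hT : IsMST G w T)
    (n : ℕ) (a b : Fin n → V)
    (hedge : ∀ m : Fin n, G.Adj (a m) (b m))
    (hnt : ∀ m : Fin n, s(a m, b m) ∉ T.edgeSet)
    (hdist : Function.Injective fun m : Fin n => s(a m, b m))
    (Ts : Fin (n + 1) → SimpleGraph V)
    (h0 : Ts 0 = T)
    (hstep : ∀ m : Fin n, ∃ p : (Ts m.castSucc).Walk (a m) (b m), p.IsPath ∧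
      ∃ r ∈ p.edges,
        (∀ m' : Fin n, m' < m → r ≠ s(a m', b m')) ∧
        (∀ f ∈ p.edges, (∀ m' : Fin n, m' < m → f ≠ s(a m', b m')) → w f ≤ w r) ∧
        Ts m.succ = fromEdgeSet (((Ts m.castSucc).edgeSet \ {r}) ∪ {s(a m, b m)}))
    (k l : V) (hkl : G.Adj k l) (hklnt : s(k, l) ∉ (Ts (Fin.last n)).edgeSet)
    (q : T.Walk k l) (hq : q.IsPath)
    (rkl : Sym2 V) (hrkl : rkl ∈ q.edges) (hrklmax : ∀ f ∈ q.edges, w f ≤ w rkl) :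
    ∀ q' : (Ts (Fin.last n)).Walk k l, q'.IsPath →
      ∀ f ∈ q'.edges, (∀ m : Fin n, f ≠ s(a m, b m)) → w f ≤ w rkl := by
  have hinv : ∀ m : Fin (n + 1), (Ts m).IsAcyclic ∧
      (lightSubgraph (Ts m) w {e | ∃ m' : Fin n, m'.castSucc < m ∧ e = s(a m', b m')}
        (w rkl)).Reachable k l := by
    intro m
    induction m using Fin.induction with
    | zero =>
      rw [h0]
      exact ⟨hT.1.2.isAcyclic, ⟨q.transfer _ fun e he => mem_edgeSet_lightSubgraph.2
        ⟨q.edges_subset_edgeSet he, Or.inr (hrklmax e he)⟩⟩⟩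
    | succ m ih =>
      obtain ⟨p, hp, r, hr, hrI, hmax, hTs⟩ := hstep m
      have himposed : {e | ∃ m' : Fin n, m'.castSucc < m.succ ∧ e = s(a m', b m')} =
          insert s(a m, b m)
            {e | ∃ m' : Fin n, m'.castSucc < m.castSucc ∧ e = s(a m', b m')} := by
        ext e
        simp only [Set.mem_ofPred_eq, Set.mem_insert_iff, Fin.castSucc_lt_succ_iff,
          Fin.castSucc_lt_castSucc_iff, le_iff_eq_or_lt, or_and_right, exists_or,
          exists_eq_left]
      rw [hTs, himposed]
      refine ⟨isAcyclic_exchange ih.1 hp hr,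
        reachable_lightSubgraph_exchange (hedge m).ne hp hr ?_ ?_ ih.2⟩
      · rintro ⟨m', hm', h⟩
        exact hrI m' hm' h
      · intro f hf hfI
        exact hmax f hf fun m' hm' h => hfI ⟨m', hm', h⟩
  obtain ⟨hac, hreach⟩ := hinv (Fin.last n)
  intro q' hq' f hf hfI
  have hmem := edges_subset_of_reachable hac (lightSubgraph_le _ _ _ _) hreach hq' f hf
  refine (mem_edgeSet_lightSubgraph.1 hmem).2.resolve_left ?_
  rintro ⟨m, -, h⟩
  exact hfI m h
end

section
/- Let T be a minimum spanning tree of G and let e₁, e₂, …, eₙ be distinct nontree edges of G. Define T₀ = T and, for each m from 1 to n, let T_m be obtained from T_{m−1} by removing a maximum-weight edge among the edges of the path in T_{m−1} between the endpoints of e_m that do not belong to {e₁, …, e_{m−1}}, and adding the edge e_m. Then T_n = T_{e₁,…,eₙ} is a spanning tree of G containing all the edges e₁, …, eₙ, and cost(T_{e₁,…,eₙ}) ≤ cost(T') for every spanning tree T' of G containing all the edges e₁, …, eₙ; i.e., T_{e₁,…,eₙ} is a minimum spanning tree among those containing e₁, …, eₙ. -/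
open SimpleGraph

/-- Replacing the edge `r` of `T` by the edge `s(u, v)`. -/
def exchangeEdge {V : Type*} (T : SimpleGraph V) (r : Sym2 V) (u v : V) : SimpleGraph V :=
  T.deleteEdges {r} ⊔ edge u v

/-- `T` is a spanning tree of `G` containing the edges in `S`, and has minimum cost among
those. -/
def IsMSTContaining {V : Type*} (G : SimpleGraph V) (w : Sym2 V → ℝ) (S : Set (Sym2 V))
    (T : SimpleGraph V) : Prop :=
  IsSpanningTree G T ∧ S ⊆ T.edgeSet ∧
    ∀ T' : SimpleGraph V, IsSpanningTree G T' → S ⊆ T'.edgeSet → cost w T ≤ cost w T'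

section Exchange

variable {V : Type*} {T : SimpleGraph V} {r : Sym2 V} {u v : V}

lemma fromEdgeSet_eq_exchangeEdge :
    fromEdgeSet ((T.edgeSet \ {r}) ∪ {s(u, v)}) = exchangeEdge T r u v := by
  rw [exchangeEdge, edge, ← fromEdgeSet_edgeSet (T.deleteEdges {r}), edgeSet_deleteEdges,
    fromEdgeSet_union]

lemma edgeSet_exchangeEdge (huv : u ≠ v) :
    (exchangeEdge T r u v).edgeSet = insert s(u, v) (T.edgeSet \ {r}) := by
  rw [exchangeEdge, edgeSet_sup, edgeSet_deleteEdges, edgeSet_edge_of_ne huv, Set.union_singleton]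

/-- In an acyclic graph, deleting an edge of the path from `u` to `v` separates `u` from `v`. -/
lemma not_reachable_deleteEdges_of_mem_path (hT : T.IsAcyclic) {p : T.Walk u v}
    (hp : p.IsPath) (hr : r ∈ p.edges) : ¬ (T.deleteEdges {r}).Reachable u v := by
  classical
  induction r with | _ x y
  rw [reachable_deleteEdges_iff_exists_walk]
  rintro ⟨q, hq⟩
  have := hT.subsingleton_path u v
  have h : p = q.bypass :=
    congrArg Subtype.val (Subsingleton.elim (⟨p, hp⟩ : T.Path u v) ⟨_, q.bypass_isPath⟩)
  exact hq (q.edges_bypass_subset_edges (h ▸ hr))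

lemma notMem_edgeSet_sdiff_of_not_reachable (h : ¬ (T.deleteEdges {r}).Reachable u v) :
    s(u, v) ∉ T.edgeSet \ {r} := by
  rw [← edgeSet_deleteEdges]
  exact fun hadj => h (Adj.reachable hadj)

variable [Finite V]

lemma cost_exchangeEdge (w : Sym2 V → ℝ) (hr : r ∈ T.edgeSet)
    (h : ¬ (T.deleteEdges {r}).Reachable u v) :
    cost w (exchangeEdge T r u v) = cost w T - w r + w s(u, v) := by
  have huv : u ≠ v := by rintro rfl; exact h (Reachable.refl _)
  have hmem := notMem_edgeSet_sdiff_of_not_reachable h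
  have hT : cost w T = w r + ∑ᶠ e ∈ T.edgeSet \ {r}, w e := by
    rw [cost, ← finsum_mem_insert w (by simp) (Set.toFinite _), Set.insert_sdiff_singleton,
      Set.insert_eq_of_mem hr]
  rw [hT, cost, edgeSet_exchangeEdge huv, finsum_mem_insert w hmem (Set.toFinite _)]
  ring

lemma isTree_exchangeEdge (hT : T.IsTree) (hr : r ∈ T.edgeSet)
    (h : ¬ (T.deleteEdges {r}).Reachable u v) : (exchangeEdge T r u v).IsTree := by
  have huv : u ≠ v := by rintro rfl; exact h (Reachable.refl _)
  have hmem := notMem_edgeSet_sdiff_of_not_reachable h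
  have hacyc : (exchangeEdge T r u v).IsAcyclic :=
    (hT.isAcyclic.anti (deleteEdges_le _)).sup_edge_of_not_reachable h
  have := hT.connected.nonempty
  obtain ⟨F, hle, -, hF⟩ := (connected_top (V := V)).exists_isTree_le_of_le_of_isAcyclic
    le_top hacyc
  have hcard : F.edgeSet.ncard ≤ (exchangeEdge T r u v).edgeSet.ncard := by
    rw [edgeSet_exchangeEdge huv, Set.ncard_insert_of_notMem hmem,
      Set.ncard_sdiff_singleton_add_one hr]
    have h₁ := (isTree_iff_connected_and_card.mp hF).2
    have h₂ := (isTree_iff_connected_and_card.mp hT).2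
    rw [Nat.card_coe_set_eq] at h₁ h₂
    omega
  have heq : exchangeEdge T r u v = F :=
    edgeSet_inj.mp (Set.eq_of_subset_of_ncard_le (edgeSet_mono hle) hcard)
  exact heq ▸ hF

lemma isSpanningTree_exchangeEdge {G : SimpleGraph V} (hT : IsSpanningTree G T)
    (huv : G.Adj u v) (hr : r ∈ T.edgeSet) (h : ¬ (T.deleteEdges {r}).Reachable u v) :
    IsSpanningTree G (exchangeEdge T r u v) :=
  ⟨sup_le ((deleteEdges_le _).trans hT.1) ((edge_le_iff _).mpr (.inr huv)),
    isTree_exchangeEdge hT.2 hr h⟩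

/-- Imposing one further edge `s(u, v)` on a minimum spanning tree containing `S`, in exchange
for a heaviest edge outside `S` on the tree path from `u` to `v`, preserves minimality. -/
lemma IsMSTContaining.exchangeEdge {G : SimpleGraph V} {w : Sym2 V → ℝ} {S : Set (Sym2 V)}
    (hT : IsMSTContaining G w S T) (huv : G.Adj u v) (huvS : s(u, v) ∉ S) {p : T.Walk u v}
    (hp : p.IsPath) (hr : r ∈ p.edges) (hrS : r ∉ S)
    (hmax : ∀ f ∈ p.edges, f ∉ S → w f ≤ w r) :
    IsMSTContaining G w (insert s(u, v) S) (exchangeEdge T r u v) := by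
  obtain ⟨hspan, hST, hmin⟩ := hT
  have hrT : r ∈ T.edgeSet := p.edges_subset_edgeSet hr
  have hsep := not_reachable_deleteEdges_of_mem_path hspan.2.isAcyclic hp hr
  refine ⟨isSpanningTree_exchangeEdge hspan huv hrT hsep, ?_, fun T' hT' hS' => ?_⟩
  · rw [edgeSet_exchangeEdge huv.ne]
    exact Set.insert_subset_insert (Set.subset_sdiff_singleton hST hrS)
  obtain ⟨huvT', hST'⟩ := Set.insert_subset_iff.mp hS'
  have hbridge : ¬ (T'.deleteEdges {s(u, v)}).Reachable u v :=
    isBridge_iff.mp (isAcyclic_iff_forall_isBridge.mp hT'.2.isAcyclic huvT')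
  obtain ⟨⟨⟨x, y⟩, hxy⟩, hd, hx, hy⟩ := p.exists_boundary_dart
    {z | (T'.deleteEdges {s(u, v)}).Reachable u z} (Reachable.refl _) hbridge
  have hxyp : s(x, y) ∈ p.edges := List.mem_map_of_mem (f := Dart.edge) hd
  have hsep' : ¬ (T'.deleteEdges {s(u, v)}).Reachable x y := fun h => hy (hx.trans h)
  have hxyS : s(x, y) ∉ S := fun hmem =>
    notMem_edgeSet_sdiff_of_not_reachable hsep' ⟨hST' hmem, fun h => huvS (h ▸ hmem)⟩
  have hle := hmin _ (isSpanningTree_exchangeEdge hT' (hspan.1 hxy) huvT' hsep') (by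
    rw [edgeSet_exchangeEdge hxy.ne]
    exact (Set.subset_sdiff_singleton hST' huvS).trans (Set.subset_insert _ _))
  rw [cost_exchangeEdge w huvT' hsep'] at hle
  rw [cost_exchangeEdge w hrT hsep]
  linarith [hmax _ hxyp hxyS]

end Exchange

/-- Let `T` be an MST of `G` and `e₁,…,eₙ` (with `eₘ = {a m, b m}`) distinct nontree
edges of `G`. Let `T₀ = T` and let `Tₘ` be obtained from `Tₘ₋₁` by removing a
maximum-weight edge, among the edges of the path in `Tₘ₋₁` between the endpoints of
`eₘ` that are not among `e₁,…,eₘ₋₁`, and adding `eₘ`. Then `Tₙ = T_{e₁,…,eₙ}` is a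
spanning tree of `G` containing all of `e₁,…,eₙ`, of minimum cost among all spanning
trees of `G` containing `e₁,…,eₙ`. -/
theorem mst_iterated_imposition_minimum {V : Type*} [Fintype V]
    (G : SimpleGraph V) (hG : G.Connected) (w : Sym2 V → ℝ)
    (T : SimpleGraph V) (hT : IsMST G w T)
    (n : ℕ) (a b : Fin n → V)
    (hedge : ∀ m : Fin n, G.Adj (a m) (b m))
    (hnt : ∀ m : Fin n, s(a m, b m) ∉ T.edgeSet)
    (hdist : Function.Injective fun m : Fin n => s(a m, b m))
    (Ts : Fin (n + 1) → SimpleGraph V)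
    (h0 : Ts 0 = T)
    (hstep : ∀ m : Fin n, ∃ p : (Ts m.castSucc).Walk (a m) (b m), p.IsPath ∧
      ∃ r ∈ p.edges,
        (∀ m' : Fin n, m' < m → r ≠ s(a m', b m')) ∧
        (∀ f ∈ p.edges, (∀ m' : Fin n, m' < m → f ≠ s(a m', b m')) → w f ≤ w r) ∧
        Ts m.succ = fromEdgeSet (((Ts m.castSucc).edgeSet \ {r}) ∪ {s(a m, b m)})) :
    IsSpanningTree G (Ts (Fin.last n)) ∧
    (∀ m : Fin n, s(a m, b m) ∈ (Ts (Fin.last n)).edgeSet) ∧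
    ∀ T' : SimpleGraph V, IsSpanningTree G T' →
      (∀ m : Fin n, s(a m, b m) ∈ T'.edgeSet) →
      cost w (Ts (Fin.last n)) ≤ cost w T' := by
  have key : ∀ i : Fin (n + 1), IsMSTContaining G w
      ((fun m : Fin n => s(a m, b m)) '' {m | m.castSucc < i}) (Ts i) := by
    intro i
    induction i using Fin.induction with
    | zero => exact ⟨h0 ▸ hT.1, by simp, fun T' hT' _ => h0 ▸ hT.2 T' hT'⟩
    | succ m ih =>
      obtain ⟨p, hp, r, hr, hrS, hmax, hTs⟩ := hstep m
      have hset : {m' : Fin n | m'.castSucc < m.succ} =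
          insert m {m' | m'.castSucc < m.castSucc} := by
        ext m'
        simp [Fin.castSucc_lt_succ_iff, le_iff_eq_or_lt]
      rw [hTs, fromEdgeSet_eq_exchangeEdge, hset, Set.image_insert_eq]
      refine ih.exchangeEdge (hedge m) ?_ hp hr ?_ fun f hf hfS => hmax f hf ?_
      · rintro ⟨m', hlt, heq⟩
        exact absurd (hdist heq) (ne_of_lt hlt)
      · rintro ⟨m', hlt, rfl⟩
        exact hrS m' hlt rfl
      · rintro m' hlt rfl
        exact hfS ⟨m', hlt, rfl⟩
  obtain ⟨hspan, hS, hmin⟩ := key (Fin.last n)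
  refine ⟨hspan, fun m => hS ⟨m, Fin.castSucc_lt_last m, rfl⟩, fun T' hT' hT'S => hmin T' hT' ?_⟩
  rintro _ ⟨m, -, rfl⟩
  exact hT'S m
end

section
/- Let T be a minimum spanning tree of G and let I = {e₁, e₂, …, eₙ} be a set of distinct nontree edges of G, such that there exists at least one spanning tree of G containing all edges of I. Then every spanning tree T_I of G of minimum cost among the spanning trees containing all edges of I satisfies cost(T_I) ≥ cost(T) + Σ_{e ∈ I} r-cost(T,e), where for e = {i,j}, r-cost(T,e) = w(e) − max{ w(f) : f an edge on P(T,i,j) }. -/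
open SimpleGraph

/-- Deleting the edge `s(i, j)` of a connected graph leaves every vertex connected to `i` or `j`. -/
lemma reachable_deleteEdges_or {V : Type*} {S : SimpleGraph V} {i j : V} (hS : S.Connected) (v : V) :
    (S.deleteEdges {s(i, j)}).Reachable i v ∨ (S.deleteEdges {s(i, j)}).Reachable j v := by
  have h := (SimpleGraph.reachable_iff_reflTransGen i v).1 (hS i v)
  induction h with
  | refl => exact Or.inl (Reachable.refl _)
  | @tail x y _ hxy ih =>
    by_cases he : s(x, y) = s(i, j)
    · rcases Sym2.eq_iff.1 he with ⟨_, rfl⟩ | ⟨_, rfl⟩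
      · exact Or.inr (Reachable.refl _)
      · exact Or.inl (Reachable.refl _)
    · have hF : (S.deleteEdges {s(i, j)}).Adj x y := deleteEdges_adj.2 ⟨hxy, he⟩
      exact ih.imp (·.trans hF.reachable) (·.trans hF.reachable)

/-- Exchange property: an edge `s(i, j)` of a tree `S` can be replaced by a suitable edge of any
walk from `i` to `j`, in any graph, yielding again a tree. -/
lemma exists_mem_edges_isTree_exchange {V : Type*} {S T : SimpleGraph V} (hS : S.IsTree) {i j : V}
    (hij : S.Adj i j) (p : T.Walk i j) :
    ∃ a b : V, s(a, b) ∈ p.edges ∧ s(a, b) ∉ (S.deleteEdges {s(i, j)}).edgeSet ∧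
      (S.deleteEdges {s(i, j)} ⊔ edge a b).IsTree := by
  have hbr : ¬ (S.deleteEdges {s(i, j)}).Reachable i j :=
    isBridge_iff.1 (isAcyclic_iff_forall_isBridge.1 hS.isAcyclic hij)
  obtain ⟨d, hd, hia, hib⟩ := p.exists_boundary_dart
    {x | (S.deleteEdges {s(i, j)}).Reachable i x} (Reachable.refl _) hbr
  obtain ⟨⟨a, b⟩, hab⟩ := d
  have hnr : ¬ (S.deleteEdges {s(i, j)}).Reachable a b := fun h ↦ hib (hia.trans h)
  refine ⟨a, b, List.mem_map.2 ⟨_, hd, rfl⟩, fun h ↦ hnr (Adj.reachable h), ?_,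
    (hS.isAcyclic.anti (deleteEdges_le _)).sup_edge_of_not_reachable hnr⟩
  have hle : S.deleteEdges {s(i, j)} ≤ S.deleteEdges {s(i, j)} ⊔ edge a b := le_sup_left
  have hadj : (S.deleteEdges {s(i, j)} ⊔ edge a b).Adj a b :=
    Or.inr ((edge_adj ..).2 ⟨Or.inl ⟨rfl, rfl⟩, hab.ne⟩)
  have hjb := (reachable_deleteEdges_or hS.connected b).resolve_left hib
  have hreach : (S.deleteEdges {s(i, j)} ⊔ edge a b).Reachable i j :=
    ((hia.mono hle).trans hadj.reachable).trans (hjb.mono hle).symm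
  refine (connected_iff_exists_forall_reachable _).2 ⟨i, fun v ↦ ?_⟩
  rcases reachable_deleteEdges_or (i := i) (j := j) hS.connected v with h | h
  · exact h.mono hle
  · exact hreach.trans (h.mono hle)

lemma cost_deleteEdges_add {V : Type*} [Finite V] (w : Sym2 V → ℝ) {S : SimpleGraph V} {e : Sym2 V}
    (he : e ∈ S.edgeSet) : cost w (S.deleteEdges {e}) + w e = cost w S := by
  have hS : S.edgeSet = insert e (S.deleteEdges {e}).edgeSet := by
    rw [edgeSet_deleteEdges, Set.insert_sdiff_singleton, Set.insert_eq_of_mem he]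
  rw [cost, cost, hS, finsum_mem_insert _ (by simp) (Set.toFinite _), add_comm]

lemma cost_sup_edge {V : Type*} [Finite V] (w : Sym2 V → ℝ) {F : SimpleGraph V} {a b : V}
    (hne : a ≠ b) (hab : s(a, b) ∉ F.edgeSet) :
    cost w (F ⊔ edge a b) = cost w F + w s(a, b) := by
  rw [cost, cost, edgeSet_sup, edgeSet_edge_of_ne hne, Set.union_singleton,
    finsum_mem_insert _ hab (Set.toFinite _), add_comm]

/-- The lower bound holds for every spanning tree containing the imposed edges, and needs only that
`M e` bounds the weights along some walk of the minimum spanning tree joining the ends of `e`. -/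
lemma IsMST.cost_add_sum_le {V : Type*} [Finite V] {G : SimpleGraph V} {w : Sym2 V → ℝ}
    {T : SimpleGraph V} (hT : IsMST G w T) (M : Sym2 V → ℝ) (I : Finset (Sym2 V))
    (hM : ∀ i j : V, s(i, j) ∈ I → ∃ p : T.Walk i j, ∀ f ∈ p.edges, w f ≤ M s(i, j))
    {S : SimpleGraph V} (hS : IsSpanningTree G S) (hIS : ∀ e ∈ I, e ∈ S.edgeSet) :
    cost w T + ∑ e ∈ I, (w e - M e) ≤ cost w S := by
  classical
  induction I using Finset.induction_on generalizing S with
  | empty => simpa using hT.2 S hS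
  | insert e I heI ih =>
    induction e using Sym2.ind with
    | _ i j =>
      have hij : s(i, j) ∈ S.edgeSet := hIS _ (Finset.mem_insert_self _ _)
      obtain ⟨p, hp⟩ := hM i j (Finset.mem_insert_self _ _)
      obtain ⟨a, b, hab, hnew, htree⟩ := exists_mem_edges_isTree_exchange hS.2 hij p
      have hTab : T.Adj a b := p.edges_subset_edgeSet hab
      have hle : S.deleteEdges {s(i, j)} ⊔ edge a b ≤ G :=
        sup_le ((deleteEdges_le _).trans hS.1) ((edge_le_iff _).2 (Or.inr (hT.1.1 hTab)))
      have key := ih (fun i j h ↦ hM i j (Finset.mem_insert_of_mem h)) ⟨hle, htree⟩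
        (fun e he ↦ edgeSet_mono le_sup_left (by
          rw [edgeSet_deleteEdges]
          exact ⟨hIS e (Finset.mem_insert_of_mem he), fun h ↦ heI (h ▸ he)⟩))
      rw [cost_sup_edge w hTab.ne hnew] at key
      rw [Finset.sum_insert heI]
      linarith [cost_deleteEdges_add w hij, hp _ hab]

/-- Let `T` be an MST of `G` and `I` a set of distinct nontree edges of `G` such that
some spanning tree of `G` contains all edges of `I`. For `e = {i,j} ∈ I`, let `M e` be
the maximum weight of an edge on the path `P(T,i,j)`, so that
`r-cost(T,e) = w e - M e`. Then every minimum-cost spanning tree `TI` among the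
spanning trees of `G` containing all edges of `I` satisfies
`cost TI ≥ cost T + ∑_{e ∈ I} (w e - M e)`. -/
theorem mst_imposed_edges_lower_bound {V : Type*} [Fintype V]
    (G : SimpleGraph V) (hG : G.Connected) (w : Sym2 V → ℝ)
    (T : SimpleGraph V) (hT : IsMST G w T)
    (I : Finset (Sym2 V))
    (hI : ∀ e ∈ I, e ∈ G.edgeSet ∧ e ∉ T.edgeSet)
    (hex : ∃ T' : SimpleGraph V, IsSpanningTree G T' ∧ ∀ e ∈ I, e ∈ T'.edgeSet)
    (M : Sym2 V → ℝ)
    (hM : ∀ e ∈ I, ∀ i j : V, e = s(i, j) → ∀ p : T.Walk i j, p.IsPath →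
      (∃ f ∈ p.edges, w f = M e) ∧ ∀ f ∈ p.edges, w f ≤ M e)
    (TI : SimpleGraph V)
    (hTI : IsSpanningTree G TI ∧ (∀ e ∈ I, e ∈ TI.edgeSet) ∧
      ∀ T' : SimpleGraph V, IsSpanningTree G T' → (∀ e ∈ I, e ∈ T'.edgeSet) →
        cost w TI ≤ cost w T') :
    cost w TI ≥ cost w T + ∑ e ∈ I, (w e - M e) := by
  refine hT.cost_add_sum_le M I (fun i j he ↦ ?_) hTI.1 hTI.2.1
  obtain ⟨p, hp⟩ := hT.1.2.connected.exists_isPath i j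
  exact ⟨p, (hM _ he i j rfl p hp).2⟩
end
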